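/- arXiv:1206.2568 — 6 statements merged into one kernel-verified Lean document; each statement's English description precedes it below -/
import Mathlib

section
/- Let G = (L, R, E) be a (c, ε, δ)-expander Tanner graph on n left vertices, where ε > 2/3 and εc is an integer. Then for every set U ⊆ L with |U| ≤ ((3ε−2)/(2ε−1))·(⌊δn⌋ − 1), there exists a feasible edge-weight assignment with respect to U. (This is the combinatorial core of the paper's Main Theorem: via the implicit result of Feldman et al., it implies that LP decoding of the associated code corrects ((3ε−2)/(2ε−1))·(⌊δn⌋−1) errors.) -/
open Finset

/-- The set of right-neighbors of the left (variable) node `i` in the Tanner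
graph with edge set `E`. -/
def leftNbrs {n : ℕ} {R : Type*} [Fintype R] [DecidableEq R]
    (E : Finset (Fin n × R)) (i : Fin n) : Finset R :=
  Finset.univ.filter fun j => (i, j) ∈ E

/-- The set of left-neighbors of the right (check) node `j`. -/
def rightNbrs {n : ℕ} {R : Type*} [Fintype R] [DecidableEq R]
    (E : Finset (Fin n × R)) (j : R) : Finset (Fin n) :=
  Finset.univ.filter fun i => (i, j) ∈ E

/-- `N(S)`: the set of (right) neighbors of a set `S` of left vertices. -/
def nbrSet {n : ℕ} {R : Type*} [Fintype R] [DecidableEq R]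
    (E : Finset (Fin n × R)) (S : Finset (Fin n)) : Finset R :=
  S.biUnion (leftNbrs E)

/-- `G = ([n], R, E)` is a `(c, ε, δ)`-expander: every left vertex has degree
exactly `c`, and every `S ⊆ L` with `|S| ≤ δn` satisfies `|N(S)| ≥ εc|S|`. -/
def IsExpander {R : Type*} [Fintype R] [DecidableEq R] (n c : ℕ) (ε δ : ℝ)
    (E : Finset (Fin n × R)) : Prop :=
  (∀ i : Fin n, (leftNbrs E i).card = c) ∧
  ∀ S : Finset (Fin n), (S.card : ℝ) ≤ δ * n →
    ε * c * S.card ≤ ((nbrSet E S).card : ℝ)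

/-- A weight assignment `τ` on edges is feasible w.r.t. the error set `U`:
(1) for every check node `j` and distinct neighbors `i, i'` of `j`,
`τ_{i,j} + τ_{i',j} ≥ 0`; (2) for every variable node `i`,
`Σ_{j ∈ N(i)} τ_{i,j} < γ_i`, where `γ_i = -1` if `i ∈ U` and `γ_i = 1`
otherwise. -/
def FeasibleWeights {n : ℕ} {R : Type*} [Fintype R] [DecidableEq R]
    (E : Finset (Fin n × R)) (U : Finset (Fin n)) (τ : Fin n × R → ℝ) : Prop :=
  (∀ j : R, ∀ i ∈ rightNbrs E j, ∀ i' ∈ rightNbrs E j, i ≠ i' →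
      0 ≤ τ (i, j) + τ (i', j)) ∧
  ∀ i : Fin n, (∑ j ∈ leftNbrs E i, τ (i, j)) < (if i ∈ U then (-1 : ℝ) else 1)

/-!
Reserve for each vertex of `U` a set of `εc` checks of its own, put weight `-x` on the edges to
its reserved checks, `x` on all other edges into reserved checks, and `0` elsewhere. A vertex of
`U` then has weight at most `-(2ε - 1)cx`, and some `x` slightly above `1 / ((2ε - 1)c)` works
provided that each vertex outside `U` meets fewer than `(2ε - 1)c` reserved checks. This can fail
only for a vertex with at most `2(1 - ε)c` neighbors outside `N(U)`, so these vertices get `εc`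
checks of their own as well, which leaves at most `(1 - ε)c < (2ε - 1)c` of their checks to be
reserved for `U`. Expansion enters twice: a set of `⌊δn⌋` vertices made of `U` and such vertices
would have too few neighbors, so `U` together with all of them has fewer than `⌊δn⌋` elements, and
then Hall's theorem reserves the checks.
-/

section FinsetFamily

variable {ι α : Type*} [DecidableEq α]

/-- Hall's theorem applied to `k` copies of each index. -/
theorem exists_subset_card_eq_pairwise_disjoint (t : ι → Finset α) (k : ℕ)
    (hall : ∀ S : Finset ι, k * #S ≤ #(S.biUnion t)) :
    ∃ A : ι → Finset α, (∀ i, A i ⊆ t i) ∧ (∀ i, #(A i) = k) ∧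
      Pairwise (Function.onFun Disjoint A) := by
  classical
  have hall_copies : ∀ S : Finset (ι × Fin k), #S ≤ #(S.biUnion fun p => t p.1) := fun S =>
    calc #S ≤ #(S.image Prod.fst ×ˢ (univ : Finset (Fin k))) :=
          card_le_card fun _ hp => mem_product.2 ⟨mem_image_of_mem _ hp, mem_univ _⟩
      _ = k * #(S.image Prod.fst) := by rw [card_product, card_fin, mul_comm]
      _ ≤ #((S.image Prod.fst).biUnion t) := hall _
      _ = #(S.biUnion fun p => t p.1) := by rw [image_biUnion]
  obtain ⟨f, f_inj, f_mem⟩ := (all_card_le_biUnion_card_iff_exists_injective _).1 hall_copies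
  refine ⟨fun i => univ.image fun a => f (i, a), fun i => ?_, fun i => ?_, fun i i' hne => ?_⟩
  · exact image_subset_iff.2 fun a _ => f_mem (i, a)
  · exact (card_image_of_injective _ (f_inj.comp (Prod.mk_right_injective i))).trans
      (card_fin k)
  · simp only [Function.onFun, disjoint_left, mem_image, mem_univ, true_and]
    rintro _ ⟨a, rfl⟩ ⟨b, hb⟩
    exact hne (congrArg Prod.fst (f_inj hb)).symm

theorem exists_subset_card_eq_pairwiseDisjoint_coe (t : ι → Finset α) (k : ℕ) (V : Finset ι)
    (hall : ∀ S ⊆ V, k * #S ≤ #(S.biUnion t)) :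
    ∃ A : ι → Finset α, (∀ i ∈ V, A i ⊆ t i) ∧ (∀ i ∈ V, #(A i) = k) ∧
      (V : Set ι).PairwiseDisjoint A := by
  classical
  obtain ⟨B, hB_sub, hB_card, hB_disj⟩ :=
    exists_subset_card_eq_pairwise_disjoint (fun i : V => t i) k fun S => by
      have := hall (S.map (.subtype _)) (map_subtype_subset S)
      rwa [card_map, map_eq_image, image_biUnion] at this
  let A : ι → Finset α := Function.extend Subtype.val B fun _ => ∅
  have hAB (i : ι) (hi : i ∈ V) : A i = B ⟨i, hi⟩ :=
    Subtype.val_injective.extend_apply B _ ⟨i, hi⟩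
  refine ⟨A, fun i hi => ?_, fun i hi => ?_, fun i hi i' hi' hne => ?_⟩
  · exact hAB i hi ▸ hB_sub ⟨i, hi⟩
  · exact hAB i hi ▸ hB_card ⟨i, hi⟩
  · rw [Function.onFun, hAB i hi, hAB i' hi']
    exact hB_disj (Subtype.coe_ne_coe.1 hne)

theorem card_inter_add_card_le_of_disjoint {s M X : Finset α} (hX : X ⊆ s) (hMX : Disjoint M X) :
    #(s ∩ M) + #X ≤ #s := by
  rw [← card_union_of_disjoint (hMX.mono_left inter_subset_right)]
  exact card_le_card (union_subset inter_subset_left hX)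

theorem card_biUnion_union_le [DecidableEq ι] (t : ι → Finset α) (U W : Finset ι) (c d : ℕ)
    (hU : ∀ i ∈ U, #(t i) ≤ c) (hW : ∀ i ∈ W, #(t i \ U.biUnion t) ≤ d) :
    #((U ∪ W).biUnion t) ≤ #U * c + #W * d :=
  calc #((U ∪ W).biUnion t)
      = #(U.biUnion t ∪ W.biUnion fun i => t i \ U.biUnion t) := by
        congr 1
        ext j
        simp only [mem_biUnion, mem_union, mem_sdiff]
        grind
    _ ≤ #(U.biUnion t) + #(W.biUnion fun i => t i \ U.biUnion t) := card_union_le _ _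
    _ ≤ #U * c + #W * d :=
        add_le_add (card_biUnion_le_card_mul _ _ _ hU) (card_biUnion_le_card_mul _ _ _ hW)

end FinsetFamily

section MatchingWeight

variable {ι R : Type*} [DecidableEq ι] [DecidableEq R] {U : Finset ι} {A : ι → Finset R} {x : ℝ}

/-- The edge weights attached to a matching that reserves the checks `A i` for each `i ∈ U`:
`-x` on the matched edges, `x` on every other pair whose check is reserved, and `0` elsewhere. -/
def matchingWeight (U : Finset ι) (A : ι → Finset R) (x : ℝ) (e : ι × R) : ℝ :=
  if e.1 ∈ U ∧ e.2 ∈ A e.1 then -x else if e.2 ∈ U.biUnion A then x else 0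

theorem matchingWeight_add_nonneg (hx : 0 ≤ x) (hA : (U : Set ι).PairwiseDisjoint A)
    {i i' : ι} (hne : i ≠ i') (j : R) :
    0 ≤ matchingWeight U A x (i, j) + matchingWeight U A x (i', j) := by
  have not_both : ¬((i ∈ U ∧ j ∈ A i) ∧ i' ∈ U ∧ j ∈ A i') := fun ⟨⟨hi, hj⟩, hi', hj'⟩ =>
    disjoint_left.1 (hA hi hi' hne) hj hj'
  have mem_reserved {l : ι} (hl : l ∈ U ∧ j ∈ A l) : j ∈ U.biUnion A :=
    mem_biUnion.2 ⟨l, hl⟩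
  unfold matchingWeight
  split_ifs <;> first | tauto | linarith

theorem sum_matchingWeight_le_of_mem (hx : 0 ≤ x) {i : ι} (hi : i ∈ U) {s : Finset R}
    (hs : A i ⊆ s) :
    ∑ j ∈ s, matchingWeight U A x (i, j) ≤ (#s - 2 * #(A i)) * x := by
  have on_matched : ∑ j ∈ A i, matchingWeight U A x (i, j) = #(A i) * -x := by
    rw [← nsmul_eq_mul]
    exact sum_eq_card_nsmul fun j hj => if_pos ⟨hi, hj⟩
  have off_matched : ∑ j ∈ s \ A i, matchingWeight U A x (i, j) ≤ #(s \ A i) * x := by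
    rw [← nsmul_eq_mul]
    refine sum_le_card_nsmul _ _ _ fun j _ => ?_
    unfold matchingWeight
    split_ifs <;> linarith
  rw [cast_card_sdiff hs] at off_matched
  rw [← sum_sdiff hs]
  linarith

theorem sum_matchingWeight_of_notMem {i : ι} (hi : i ∉ U) (s : Finset R) :
    ∑ j ∈ s, matchingWeight U A x (i, j) = #(s ∩ U.biUnion A) * x := by
  simp only [matchingWeight, hi, false_and, if_false]
  rw [sum_ite_mem, sum_const, nsmul_eq_mul]

end MatchingWeight

section TannerGraph

variable {n : ℕ} {R : Type*} [Fintype R] [DecidableEq R] {E : Finset (Fin n × R)}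
  {U : Finset (Fin n)} {A : Fin n → Finset R}

theorem exists_feasibleWeights_of_pairwiseDisjoint (d : ℕ)
    (hA_sub : ∀ i ∈ U, A i ⊆ leftNbrs E i) (hA_disj : (U : Set (Fin n)).PairwiseDisjoint A)
    (hU : ∀ i ∈ U, #(leftNbrs E i) + d < 2 * #(A i))
    (hUc : ∀ i ∉ U, #(leftNbrs E i ∩ U.biUnion A) ≤ d) :
    ∃ τ : Fin n × R → ℝ, FeasibleWeights E U τ := by
  obtain ⟨x, hx_pos, hx_lower, hx_upper⟩ : ∃ x : ℝ, 0 < x ∧ 1 < (d + 1) * x ∧ d * x < 1 := by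
    refine ⟨2 / (2 * d + 1), by positivity, ?_, ?_⟩
    · rw [mul_div_assoc', lt_div_iff₀ (by positivity)]
      linarith
    · rw [mul_div_assoc', div_lt_iff₀ (by positivity)]
      linarith
  refine ⟨matchingWeight U A x,
    fun j i _ i' _ hne => matchingWeight_add_nonneg hx_pos.le hA_disj hne j, fun i => ?_⟩
  split_ifs with hi
  · have gap : (#(leftNbrs E i) + d + 1 : ℝ) ≤ 2 * #(A i) := by exact_mod_cast hU i hi
    calc ∑ j ∈ leftNbrs E i, matchingWeight U A x (i, j)
        ≤ (#(leftNbrs E i) - 2 * #(A i)) * x :=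
          sum_matchingWeight_le_of_mem hx_pos.le hi (hA_sub i hi)
      _ ≤ -(d + 1) * x := by gcongr; linarith
      _ < -1 := by linarith
  · calc ∑ j ∈ leftNbrs E i, matchingWeight U A x (i, j)
        = #(leftNbrs E i ∩ U.biUnion A) * x := sum_matchingWeight_of_notMem hi _
      _ ≤ d * x := by gcongr; exact hUc i hi
      _ < 1 := hx_upper

/-- The left vertices outside `U` with at most `d` neighbors outside `N(U)`: those that could
receive too many positive weights unless they too are matched. -/
def almostCovered (E : Finset (Fin n × R)) (U : Finset (Fin n)) (d : ℕ) : Finset (Fin n) :=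
  {i | i ∉ U ∧ #(leftNbrs E i \ nbrSet E U) ≤ d}

theorem card_almostCovered_lt {c d k r : ℕ} (hdeg : ∀ i ∈ U, #(leftNbrs E i) ≤ c)
    (hexp : ∀ S : Finset (Fin n), #S = #U + r → k * #S ≤ #(nbrSet E S))
    (hr : #U * c + r * d < k * (#U + r)) :
    #(almostCovered E U d) < r := by
  by_contra! hle
  obtain ⟨W, hW_sub, rfl⟩ := exists_subset_card_eq hle
  have hW {i : Fin n} (hi : i ∈ W) : i ∉ U ∧ #(leftNbrs E i \ nbrSet E U) ≤ d :=
    (mem_filter.1 (hW_sub hi)).2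
  have hUW : #(U ∪ W) = #U + #W :=
    card_union_of_disjoint (disjoint_right.2 fun _ hi => (hW hi).1)
  have few : #(nbrSet E (U ∪ W)) ≤ #U * c + #W * d :=
    card_biUnion_union_le _ U W c d hdeg fun _ hi => (hW hi).2
  have many := hexp _ hUW
  rw [hUW] at many
  omega

theorem card_leftNbrs_inter_biUnion_add_lt {d : ℕ} {i : Fin n}
    (hA_sub : ∀ l ∈ U ∪ almostCovered E U d, A l ⊆ leftNbrs E l)
    (hA_card : ∀ l ∈ almostCovered E U d, d < #(A l))
    (hA_disj : (↑(U ∪ almostCovered E U d) : Set (Fin n)).PairwiseDisjoint A)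
    (hi : i ∉ U) :
    #(leftNbrs E i ∩ U.biUnion A) + d < #(leftNbrs E i) := by
  by_cases hiW : i ∈ almostCovered E U d
  · have hiV : i ∈ U ∪ almostCovered E U d := mem_union_right _ hiW
    have disj : Disjoint (U.biUnion A) (A i) := (disjoint_biUnion_left _ _ _).2 fun l hl =>
      hA_disj (mem_union_left _ hl) hiV (ne_of_mem_of_not_mem hl hi)
    have := card_inter_add_card_le_of_disjoint (hA_sub i hiV) disj
    have := hA_card i hiW
    omega
  · have many_outside : d < #(leftNbrs E i \ nbrSet E U) := by
      simpa [almostCovered, hi] using hiW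
    have reserved_sub : U.biUnion A ⊆ nbrSet E U :=
      biUnion_mono fun l hl => hA_sub l (mem_union_left _ hl)
    have := card_inter_add_card_le_of_disjoint (sdiff_subset (s := leftNbrs E i))
      (disjoint_sdiff.mono_left reserved_sub)
    omega

/-- The hypothesis `hU` is `(2k - c)|U| < (3k - 2c)m`, written without subtraction in `ℕ`. -/
theorem exists_feasibleWeights_of_regular {c k m : ℕ} (hdeg : ∀ i, #(leftNbrs E i) = c)
    (hexp : ∀ S : Finset (Fin n), #S ≤ m → k * #S ≤ #(nbrSet E S)) (hck : 2 * c < 3 * k)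
    (hU : 2 * k * #U + 2 * c * m < 3 * k * m + c * #U) :
    ∃ τ : Fin n × R → ℝ, FeasibleWeights E U τ := by
  obtain rfl | ⟨i₀, _⟩ := U.eq_empty_or_nonempty
  · exact ⟨0, by simp [FeasibleWeights]⟩
  have hm : 1 ≤ m := by
    by_contra! hm
    nlinarith
  have hkc : k ≤ c := by simpa [nbrSet, hdeg] using hexp {i₀} (by simpa using hm)
  have hUm : #U ≤ m := by
    by_contra! hlt
    nlinarith
  obtain ⟨q, rfl⟩ := Nat.exists_eq_add_of_le hkc
  obtain ⟨r, rfl⟩ := Nat.exists_eq_add_of_le hUm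
  have hqk : 2 * q < k := by omega
  have hW : #(almostCovered E U (2 * q)) < r :=
    card_almostCovered_lt (fun i _ => (hdeg i).le) (fun S hS => hexp S hS.le) (by nlinarith)
  obtain ⟨A, hA_sub, hA_card, hA_disj⟩ := exists_subset_card_eq_pairwiseDisjoint_coe (leftNbrs E) k
    (U ∪ almostCovered E U (2 * q)) fun S hS => hexp S <| by
      have := card_le_card hS
      have := card_union_le U (almostCovered E U (2 * q))
      omega
  refine exists_feasibleWeights_of_pairwiseDisjoint (A := A) (k - q - 1)
    (fun i hi => hA_sub i (mem_union_left _ hi))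
    (hA_disj.subset (coe_subset.2 subset_union_left)) (fun i hi => ?_) fun i hi => ?_
  · rw [hdeg, hA_card i (mem_union_left _ hi)]
    omega
  · have := card_leftNbrs_inter_biUnion_add_lt hA_sub
      (fun l hl => hqk.trans_eq (hA_card l (mem_union_right _ hl)).symm) hA_disj hi
    rw [hdeg] at this
    omega

end TannerGraph

theorem IsExpander.mul_card_le_card_nbrSet {R : Type*} [Fintype R] [DecidableEq R] {n c k : ℕ}
    {ε δ : ℝ} {E : Finset (Fin n × R)} (hexp : IsExpander n c ε δ E) (hk : (k : ℝ) = ε * c)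
    {S : Finset (Fin n)} (hS : #S ≤ ⌊δ * n⌋₊) : k * #S ≤ #(nbrSet E S) := by
  obtain rfl | hne := S.eq_empty_or_nonempty
  · simp
  · have := hexp.2 S ((Nat.le_floor_iff' hne.card_ne_zero).1 hS)
    rw [← hk] at this
    exact_mod_cast this

theorem main_theorem_feasible_weights_general {R : Type*} [Fintype R] [DecidableEq R]
    (n c : ℕ) (ε δ : ℝ) (E : Finset (Fin n × R)) (hc : 0 < c) (hε : 2 / 3 < ε)
    (k : ℕ) (hk : (k : ℝ) = ε * c) (hexp : IsExpander n c ε δ E) (U : Finset (Fin n))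
    (hU : (#U : ℝ) < (3 * ε - 2) / (2 * ε - 1) * ⌊δ * n⌋₊) :
    ∃ τ : Fin n × R → ℝ, FeasibleWeights E U τ := by
  have hc' : (0 : ℝ) < c := Nat.cast_pos.2 hc
  refine exists_feasibleWeights_of_regular hexp.1
    (fun S => hexp.mul_card_le_card_nbrSet hk) (k := k) ?_ ?_
  · have : (2 * c : ℝ) < 3 * k := by rw [hk]; nlinarith
    exact_mod_cast this
  · rw [div_mul_eq_mul_div, lt_div_iff₀ (by linarith)] at hU
    have := mul_lt_mul_of_pos_right hU hc'
    have : (2 * k * #U + 2 * c * ⌊δ * n⌋₊ : ℝ) < 3 * k * ⌊δ * n⌋₊ + c * #U := by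
      rw [hk]; linarith
    exact_mod_cast this

/-- Main Theorem (combinatorial core): if `G` is a `(c, ε, δ)`-expander with
`ε > 2/3` and `εc ∈ ℤ`, then for every `U ⊆ L` with
`|U| ≤ ((3ε−2)/(2ε−1))·(⌊δn⌋ − 1)` there is a feasible edge-weight assignment
with respect to `U`. -/
theorem main_theorem_feasible_weights {R : Type*} [Fintype R] [DecidableEq R]
    (n c : ℕ) (ε δ : ℝ) (E : Finset (Fin n × R))
    (hc : 0 < c) (hε : 2 / 3 < ε) (hδ : 0 < δ)
    (k : ℕ) (hk : (k : ℝ) = ε * c)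
    (hexp : IsExpander n c ε δ E) (U : Finset (Fin n))
    (hU : (U.card : ℝ) ≤ (3 * ε - 2) / (2 * ε - 1) * ((⌊δ * n⌋₊ : ℝ) - 1)) :
    ∃ τ : Fin n × R → ℝ, FeasibleWeights E U τ := by
  have ratio_pos : 0 < (3 * ε - 2) / (2 * ε - 1) := div_pos (by linarith) (by linarith)
  exact main_theorem_feasible_weights_general n c ε δ E hc hε k hk hexp U
    (hU.trans_lt (mul_lt_mul_of_pos_left (sub_one_lt _) ratio_pos))
end

section
/- Let G = (L, R, E) be a (c, ε, δ)-expander Tanner graph on n left vertices with ε > 2/3, and let U ⊆ L satisfy |U| < ((3ε−2)/(2ε−1))·⌊δn⌋. Define Û = { i ∈ L \ U : |N(i) ∩ N(U)| ≥ (2ε−1)c }. Then |U ∪ Û| = |U| + |Û| ≤ δn (indeed |U ∪ Û| < ⌊δn⌋). -/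
/-!
Let `m = ⌊δn⌋` and `θ = 2ε - 1`. A single vertex has only `c` neighbors, so `ε ≤ 1`, and hence
`|U| < m`. If `U ∪ Û` had at least `m` elements, there would be a set `S` of exactly `m` vertices
with `U ⊆ S ⊆ U ∪ Û`, to which the expansion hypothesis applies. But `N(S)` is small: each vertex
of `U` contributes at most `c` neighbors, and each vertex of `S \ U` at most `(1 - θ)c` neighbors
outside `N(U)`. Hence `ε c m ≤ c |U| + (1 - θ) c (m - |U|)`, that is `(ε + θ - 1) m ≤ θ |U|`,
contrary to the bound on `|U|`. The argument works for any threshold `θ > 0`; the choice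
`θ = 2ε - 1` turns `(ε + θ - 1) / θ` into `(3ε - 2) / (2ε - 1)`.
-/

open Finset

section

variable {R : Type*} [Fintype R] [DecidableEq R] {n c m : ℕ} {ε δ θ : ℝ} {E : Finset (Fin n × R)}
  {U W S : Finset (Fin n)}

theorem nbrSet_subset_union_biUnion_sdiff (E : Finset (Fin n × R)) (U S : Finset (Fin n)) :
    nbrSet E S ⊆ nbrSet E U ∪ (S \ U).biUnion fun i => leftNbrs E i \ nbrSet E U := by
  intro j hj
  obtain ⟨i, hiS, hij⟩ := mem_biUnion.1 hj
  by_cases hjU : j ∈ nbrSet E U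
  · exact mem_union_left _ hjU
  · have hiU : i ∉ U := fun hiU => hjU (mem_biUnion.2 ⟨i, hiU, hij⟩)
    exact mem_union_right _
      (mem_biUnion.2 ⟨i, mem_sdiff.2 ⟨hiS, hiU⟩, mem_sdiff.2 ⟨hij, hjU⟩⟩)

theorem card_nbrSet_le_add_sum_card_sdiff (E : Finset (Fin n × R)) (U S : Finset (Fin n)) :
    (nbrSet E S).card ≤
      (nbrSet E U).card + ∑ i ∈ S \ U, (leftNbrs E i \ nbrSet E U).card :=
  calc (nbrSet E S).card
    _ ≤ (nbrSet E U ∪ (S \ U).biUnion fun i => leftNbrs E i \ nbrSet E U).card :=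
      card_le_card (nbrSet_subset_union_biUnion_sdiff E U S)
    _ ≤ (nbrSet E U).card + ((S \ U).biUnion fun i => leftNbrs E i \ nbrSet E U).card :=
      card_union_le _ _
    _ ≤ (nbrSet E U).card + ∑ i ∈ S \ U, (leftNbrs E i \ nbrSet E U).card := by
      gcongr
      exact card_biUnion_le

theorem card_leftNbrs_sdiff_le {i : Fin n} {A : Finset R} (hdeg : (leftNbrs E i).card ≤ c)
    (hi : θ * c ≤ ((leftNbrs E i ∩ A).card : ℝ)) :
    ((leftNbrs E i \ A).card : ℝ) ≤ (1 - θ) * c := by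
  have hsplit : ((leftNbrs E i \ A).card : ℝ) + (leftNbrs E i ∩ A).card ≤ c := by
    exact_mod_cast (card_sdiff_add_card_inter (leftNbrs E i) A).trans_le hdeg
  linarith

theorem card_nbrSet_le_of_threshold (hdeg : ∀ i, (leftNbrs E i).card ≤ c)
    (hS : ∀ i ∈ S \ U, θ * c ≤ ((leftNbrs E i ∩ nbrSet E U).card : ℝ)) :
    ((nbrSet E S).card : ℝ) ≤ c * (U.card + (1 - θ) * (S \ U).card) :=
  calc ((nbrSet E S).card : ℝ)
    _ ≤ (nbrSet E U).card + ∑ i ∈ S \ U, ((leftNbrs E i \ nbrSet E U).card : ℝ) := by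
      exact_mod_cast card_nbrSet_le_add_sum_card_sdiff E U S
    _ ≤ U.card * c + (S \ U).card • ((1 - θ) * c) := by
      gcongr
      · exact_mod_cast card_biUnion_le_card_mul _ _ _ fun i _ => hdeg i
      · exact sum_le_card_nsmul _ _ _ fun i hi => card_leftNbrs_sdiff_le (hdeg i) (hS i hi)
    _ = c * (U.card + (1 - θ) * (S \ U).card) := by
      rw [nsmul_eq_mul]
      ring

theorem IsExpander.le_one (hexp : IsExpander n c ε δ E) (hc : 0 < c) (hδn : 1 ≤ δ * n) :
    ε ≤ 1 := by
  have hn : 0 < n := by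
    rcases n.eq_zero_or_pos with rfl | hn
    · norm_num at hδn
    · exact hn
  have hsingle : ε * c ≤ 1 * c := by
    simpa [nbrSet, hexp.1] using hexp.2 {⟨0, hn⟩} (by simpa using hδn)
  exact le_of_mul_le_mul_right hsingle (by exact_mod_cast hc)

theorem IsExpander.mul_card_le_of_threshold (hexp : IsExpander n c ε δ E) (hc : 0 < c)
    (hUS : U ⊆ S) (hSδ : (S.card : ℝ) ≤ δ * n)
    (hS : ∀ i ∈ S \ U, θ * c ≤ ((leftNbrs E i ∩ nbrSet E U).card : ℝ)) :
    (ε + θ - 1) * S.card ≤ θ * U.card := by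
  have hcard : ((S \ U).card : ℝ) = S.card - U.card := cast_card_sdiff hUS
  have hcount : c * (ε * S.card) ≤ c * (U.card + (1 - θ) * (S.card - U.card)) :=
    calc c * (ε * S.card)
      _ = ε * c * S.card := by ring
      _ ≤ (nbrSet E S).card := hexp.2 S hSδ
      _ ≤ c * (U.card + (1 - θ) * (S.card - U.card)) :=
        hcard ▸ card_nbrSet_le_of_threshold (fun i => (hexp.1 i).le) hS
  have hdiv := le_of_mul_le_mul_left hcount (by exact_mod_cast hc)
  linarith

theorem IsExpander.card_union_lt_of_threshold (hexp : IsExpander n c ε δ E) (hc : 0 < c)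
    (hθ : 0 < θ) (hm : 0 < m) (hmδ : (m : ℝ) ≤ δ * n)
    (hW : ∀ i ∈ W \ U, θ * c ≤ ((leftNbrs E i ∩ nbrSet E U).card : ℝ))
    (hU : θ * U.card < (ε + θ - 1) * m) :
    (U ∪ W).card < m := by
  have hε : ε ≤ 1 := hexp.le_one hc (le_trans (by exact_mod_cast hm) hmδ)
  have hUm : U.card ≤ m := by
    have hmul : θ * U.card ≤ θ * m := hU.le.trans (by gcongr; linarith)
    exact_mod_cast le_of_mul_le_mul_left hmul hθ
  by_contra! hle
  obtain ⟨S, hUS, hSW, rfl⟩ := exists_subsuperset_card_eq subset_union_left hUm hle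
  have hS : ∀ i ∈ S \ U, θ * c ≤ ((leftNbrs E i ∩ nbrSet E U).card : ℝ) := fun i hi =>
    hW i (union_sdiff_left U W ▸ sdiff_subset_sdiff hSW subset_rfl hi)
  exact hU.not_ge (hexp.mul_card_le_of_threshold hc hUS hmδ hS)

theorem bound_on_U_union_Uhat_general (hexp : IsExpander n c ε δ E) (hc : 0 < c) (hθ : 0 < θ)
    (hW : ∀ i ∈ W, i ∉ U ∧ θ * c ≤ ((leftNbrs E i ∩ nbrSet E U).card : ℝ))
    (hU : (U.card : ℝ) < (ε + θ - 1) / θ * (⌊δ * n⌋₊ : ℝ)) :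
    (U ∪ W).card = U.card + W.card ∧
      ((U ∪ W).card : ℝ) ≤ δ * n ∧ (U ∪ W).card < ⌊δ * n⌋₊ := by
  have hdisj : Disjoint U W := disjoint_right.2 fun i hi => (hW i hi).1
  have hfloor : ⌊δ * n⌋₊ ≠ 0 := by
    intro h0
    rw [h0, Nat.cast_zero, mul_zero] at hU
    exact hU.not_ge (Nat.cast_nonneg _)
  have hfloor_le : (⌊δ * n⌋₊ : ℝ) ≤ δ * n := (Nat.le_floor_iff' hfloor).1 le_rfl
  rw [div_mul_eq_mul_div, lt_div_iff₀' hθ] at hU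
  have hlt : (U ∪ W).card < ⌊δ * n⌋₊ :=
    hexp.card_union_lt_of_threshold hc hθ (Nat.pos_of_ne_zero hfloor) hfloor_le
      (fun i hi => (hW i (sdiff_subset hi)).2) hU
  exact ⟨card_union_of_disjoint hdisj, le_trans (by exact_mod_cast hlt.le) hfloor_le, hlt⟩

end

/-- Proposition (bound on `U ∪ Û`): if `G` is a `(c, ε, δ)`-expander with
`ε > 2/3`, `|U| < ((3ε−2)/(2ε−1))·⌊δn⌋`, and
`Û = { i ∉ U : |N(i) ∩ N(U)| ≥ (2ε−1)c }`, then
`|U ∪ Û| = |U| + |Û| ≤ δn` (indeed `|U ∪ Û| < ⌊δn⌋`). -/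
theorem bound_on_U_union_Uhat {R : Type*} [Fintype R] [DecidableEq R]
    (n c : ℕ) (ε δ : ℝ) (E : Finset (Fin n × R))
    (hc : 0 < c) (hε : 2 / 3 < ε) (hδ : 0 < δ)
    (hexp : IsExpander n c ε δ E)
    (U Uhat : Finset (Fin n))
    (hUhat : ∀ i : Fin n, i ∈ Uhat ↔
      i ∉ U ∧ (2 * ε - 1) * c ≤ ((leftNbrs E i ∩ nbrSet E U).card : ℝ))
    (hU : (U.card : ℝ) < (3 * ε - 2) / (2 * ε - 1) * (⌊δ * n⌋₊ : ℝ)) :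
    (U ∪ Uhat).card = U.card + Uhat.card ∧
      ((U ∪ Uhat).card : ℝ) ≤ δ * n ∧ (U ∪ Uhat).card < ⌊δ * n⌋₊ := by
  have hthreshold : ε + (2 * ε - 1) - 1 = 3 * ε - 2 := by ring
  exact bound_on_U_union_Uhat_general hexp hc (by linarith) (fun i => (hUhat i).1) (hthreshold ▸ hU)
end

section
/- Let G = (L, R, E) be a (c, ε, δ)-expander Tanner graph on n left vertices with ε > 2/3, let U ⊆ L, and let U'' ⊆ { i ∈ L \ U : |N(i) ∩ N(U)| ≥ (2ε−1)c } be such that |U ∪ U''| ≤ δn. Then (3ε−2)·|U''| ≤ (1−ε)·|U|, i.e., |U''| ≤ ((1−ε)/(3ε−2))·|U|. -/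
open Finset

/-!
Count `N(U ∪ U'')` twice. Expansion gives at least `εc(|U| + |U''|)` vertices. On the other hand,
`U` has at most `c|U|` neighbors, and each vertex of `U''` has so many neighbors in `N(U)` that it
contributes at most `c - (2ε - 1)c` new ones.
-/

section SetFamily

variable {ι R K : Type*} [DecidableEq R]

theorem card_union_biUnion_le_card_add_sum_card_sdiff (A : Finset R) (t : Finset ι)
    (f : ι → Finset R) : #(A ∪ t.biUnion f) ≤ #A + ∑ i ∈ t, #(f i \ A) := by
  have hsub : A ∪ t.biUnion f ⊆ A ∪ t.biUnion fun i => f i \ A := by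
    intro j
    simp only [mem_union, mem_biUnion, mem_sdiff]
    tauto
  calc #(A ∪ t.biUnion f) ≤ #(A ∪ t.biUnion fun i => f i \ A) := card_le_card hsub
    _ ≤ #A + #(t.biUnion fun i => f i \ A) := card_union_le _ _
    _ ≤ #A + ∑ i ∈ t, #(f i \ A) := by gcongr; exact card_biUnion_le

variable [CommRing K] [LinearOrder K] [IsStrictOrderedRing K]
  {f : ι → Finset R} {s t : Finset ι} {c : K}

theorem card_biUnion_le_card_mul_cast (hdeg : ∀ i ∈ s, (#(f i) : K) ≤ c) :
    (#(s.biUnion f) : K) ≤ #s * c :=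
  calc (#(s.biUnion f) : K) ≤ ∑ i ∈ s, (#(f i) : K) := mod_cast card_biUnion_le
    _ ≤ #s * c := by simpa only [nsmul_eq_mul] using sum_le_card_nsmul s _ c hdeg

theorem card_union_biUnion_le_of_le_card_inter {A : Finset R} {k : K}
    (hdeg : ∀ i ∈ t, (#(f i) : K) ≤ c) (hinter : ∀ i ∈ t, k ≤ #(f i ∩ A)) :
    (#(A ∪ t.biUnion f) : K) ≤ #A + #t * (c - k) := by
  have hnew : ∀ i ∈ t, (#(f i \ A) : K) ≤ c - k := by
    intro i hi
    have hsplit : (#(f i \ A) : K) + #(f i ∩ A) = #(f i) :=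
      mod_cast card_sdiff_add_card_inter (f i) A
    linarith [hdeg i hi, hinter i hi]
  calc (#(A ∪ t.biUnion f) : K) ≤ #A + ∑ i ∈ t, (#(f i \ A) : K) :=
        mod_cast card_union_biUnion_le_card_add_sum_card_sdiff A t f
    _ ≤ #A + #t * (c - k) := by
        gcongr
        simpa only [nsmul_eq_mul] using sum_le_card_nsmul t _ _ hnew

theorem bound_on_Upp_general [DecidableEq ι] {ε θ : K} (hc : 0 < c) (hst : Disjoint s t)
    (hdeg : ∀ i ∈ s ∪ t, (#(f i) : K) ≤ c)
    (hinter : ∀ i ∈ t, θ * c ≤ #(f i ∩ s.biUnion f))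
    (hexp : ε * c * #(s ∪ t) ≤ #((s ∪ t).biUnion f)) :
    (ε + θ - 1) * #t ≤ (1 - ε) * #s := by
  have hdouble : ε * c * (#s + #t) ≤ #s * c + #t * (c - θ * c) :=
    calc ε * c * (#s + #t) = ε * c * #(s ∪ t) := by rw [card_union_of_disjoint hst, Nat.cast_add]
      _ ≤ #((s ∪ t).biUnion f) := hexp
      _ = #(s.biUnion f ∪ t.biUnion f) := by rw [union_biUnion]
      _ ≤ #(s.biUnion f) + #t * (c - θ * c) :=
        card_union_biUnion_le_of_le_card_inter (fun i hi => hdeg i (mem_union_right s hi)) hinter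
      _ ≤ #s * c + #t * (c - θ * c) := by
        gcongr
        exact card_biUnion_le_card_mul_cast fun i hi => hdeg i (mem_union_left t hi)
  refine le_of_mul_le_mul_left ?_ hc
  linear_combination hdouble

end SetFamily

/-- If `G` is a `(c, ε, δ)`-expander with `ε > 2/3`, `U ⊆ L`, and
`U'' ⊆ { i ∉ U : |N(i) ∩ N(U)| ≥ (2ε−1)c }` satisfies `|U ∪ U''| ≤ δn`,
then `(3ε−2)·|U''| ≤ (1−ε)·|U|`. -/
theorem bound_on_Upp {R : Type*} [Fintype R] [DecidableEq R]
    (n c : ℕ) (ε δ : ℝ) (E : Finset (Fin n × R))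
    (hc : 0 < c) (hε : 2 / 3 < ε) (hδ : 0 < δ)
    (hexp : IsExpander n c ε δ E)
    (U Upp : Finset (Fin n))
    (hUpp : ∀ i ∈ Upp,
      i ∉ U ∧ (2 * ε - 1) * c ≤ ((leftNbrs E i ∩ nbrSet E U).card : ℝ))
    (hcard : ((U ∪ Upp).card : ℝ) ≤ δ * n) :
    (3 * ε - 2) * Upp.card ≤ (1 - ε) * U.card := by
  have hdisj : Disjoint U Upp := disjoint_right.2 fun i hi => (hUpp i hi).1
  linarith [bound_on_Upp_general (Nat.cast_pos.2 hc) hdisj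
    (fun i _ => (congrArg Nat.cast (hexp.1 i)).le) (fun i hi => (hUpp i hi).2) (hexp.2 _ hcard)]
end

section
/- Let G = (L, R, E) be a (c, ε, δ)-expander Tanner graph on n left vertices such that εc is an integer, and let U ⊆ L satisfy |U| ≤ δn. Then there exists an (εc)-matching with respect to U. -/
open Finset

/-- `M` is a matching: every right vertex is incident to at most one edge. -/
def IsMatching {n : ℕ} {R : Type*} (M : Finset (Fin n × R)) : Prop :=
  ∀ j : R, ∀ i i' : Fin n, (i, j) ∈ M → (i', j) ∈ M → i = i'

/-! The expansion of the subsets of `U` is Hall's condition for the graph in which every vertex of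
`U` is replaced by `εc` copies of itself; a system of distinct representatives of these copies
gathers into `εc` private neighbors for each vertex of `U`. -/

/-- The Halmos–Vaughan form of Hall's theorem. -/
theorem sum_le_card_biUnion_iff_exists_pairwise_disjoint {ι α : Type*} [DecidableEq α]
    (t : ι → Finset α) (d : ι → ℕ) :
    (∀ s : Finset ι, ∑ i ∈ s, d i ≤ #(s.biUnion t)) ↔
      ∃ m : ι → Finset α,
        (∀ i, m i ⊆ t i) ∧ (∀ i, #(m i) = d i) ∧ Pairwise (Function.onFun Disjoint m) := by
  classical
  constructor
  · intro hall
    have hall_copies (s : Finset (Σ i, Fin (d i))) : #s ≤ #(s.biUnion fun x => t x.1) :=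
      calc #s ≤ #((s.image Sigma.fst).sigma fun _ => univ) :=
            card_le_card fun x hx => by simpa using ⟨x.2, hx⟩
        _ = ∑ i ∈ s.image Sigma.fst, d i := by simp
        _ ≤ #((s.image Sigma.fst).biUnion t) := hall _
        _ = #(s.biUnion fun x => t x.1) := by rw [image_biUnion]
    obtain ⟨f, f_inj, f_mem⟩ :=
      (all_card_le_biUnion_card_iff_exists_injective _).1 hall_copies
    refine ⟨fun i => univ.image fun a => f ⟨i, a⟩, fun i => ?_, fun i => ?_, fun i i' hne => ?_⟩
    · exact image_subset_iff.2 fun a _ => f_mem ⟨i, a⟩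
    · exact (card_image_of_injective _ (f_inj.comp sigma_mk_injective)).trans (card_fin (d i))
    · simp only [Function.onFun, disjoint_left, mem_image, mem_univ, true_and]
      rintro _ ⟨a, rfl⟩ ⟨a', h⟩
      exact hne (congrArg Sigma.fst (f_inj h)).symm
  · rintro ⟨m, m_sub, m_card, m_disj⟩ s
    calc ∑ i ∈ s, d i = #(s.biUnion m) := by
          rw [card_biUnion fun i _ i' _ hne => m_disj hne]
          simp only [m_card]
      _ ≤ #(s.biUnion t) := card_le_card (biUnion_mono fun i _ => m_sub i)

theorem nbrSet_mono {n : ℕ} {R : Type*} [Fintype R] [DecidableEq R] (E : Finset (Fin n × R)) :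
    Monotone (nbrSet E) :=
  fun _ _ h => biUnion_subset_biUnion_of_subset_left _ h

theorem isMatching_filter_of_pairwise_disjoint {n : ℕ} {R : Type*} [DecidableEq R]
    (E : Finset (Fin n × R)) {m : Fin n → Finset R}
    (hm : Pairwise (Function.onFun Disjoint m)) : IsMatching {e ∈ E | e.2 ∈ m e.1} := by
  intro j i i' hi hi'
  by_contra hne
  exact disjoint_left.1 (hm hne) (mem_filter.1 hi).2 (mem_filter.1 hi').2

theorem expander_has_matching_general {n : ℕ} {R : Type*} [Fintype R] [DecidableEq R]
    (E : Finset (Fin n × R)) (k : ℕ) (U : Finset (Fin n))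
    (hU : ∀ S ⊆ U, k * #S ≤ #(nbrSet E S)) :
    ∃ M ⊆ E, IsMatching M ∧
      ∀ u ∈ U, k ≤ (Finset.univ.filter fun j : R => (u, j) ∈ M).card := by
  have hall (S : Finset (Fin n)) : ∑ i ∈ S, (if i ∈ U then k else 0) ≤ #(nbrSet E S) :=
    calc ∑ i ∈ S, (if i ∈ U then k else 0) = k * #{i ∈ S | i ∈ U} := by
          rw [← sum_filter, sum_const, smul_eq_mul, mul_comm]
      _ ≤ #(nbrSet E {i ∈ S | i ∈ U}) := hU _ fun _ hi => (mem_filter.1 hi).2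
      _ ≤ #(nbrSet E S) := card_le_card (nbrSet_mono E (filter_subset _ S))
  obtain ⟨m, m_sub, m_card, m_disj⟩ :=
    (sum_le_card_biUnion_iff_exists_pairwise_disjoint (leftNbrs E) _).1 hall
  refine ⟨{e ∈ E | e.2 ∈ m e.1}, filter_subset _ _,
    isMatching_filter_of_pairwise_disjoint E m_disj, fun u hu => ?_⟩
  calc k = #(m u) := by rw [m_card, if_pos hu]
    _ ≤ #{j | (u, j) ∈ {e ∈ E | e.2 ∈ m e.1}} := card_le_card fun j hj => by
        have hE : (u, j) ∈ E := by simpa [leftNbrs] using m_sub u hj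
        simp [hE, hj]

/-- If `G` is a `(c, ε, δ)`-expander with `εc ∈ ℤ` and `|U| ≤ δn`, then there
exists an `(εc)`-matching with respect to `U`: a matching `M ⊆ E` in which
every `u ∈ U` is incident to at least `εc` edges. -/
theorem expander_has_matching {R : Type*} [Fintype R] [DecidableEq R]
    (n c : ℕ) (ε δ : ℝ) (E : Finset (Fin n × R))
    (hε : 0 < ε) (hδ : 0 < δ)
    (k : ℕ) (hk : (k : ℝ) = ε * c)
    (hexp : IsExpander n c ε δ E)
    (U : Finset (Fin n)) (hU : (U.card : ℝ) ≤ δ * n) :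
    ∃ M ⊆ E, IsMatching M ∧
      ∀ u ∈ U, k ≤ (Finset.univ.filter fun j : R => (u, j) ∈ M).card :=
  expander_has_matching_general E k U fun S hS => by
    exact_mod_cast hk ▸ hexp.2 S ((Nat.cast_le.2 (card_le_card hS)).trans hU)
end

section
/- (Unique-neighbor expansion.) Let G = (L, R, E) be a (c, ε, δ)-expander Tanner graph on n left vertices. Then every subset L₀ ⊆ L with |L₀| ≤ δn satisfies |N¹(L₀)| ≥ (2ε−1)·c·|L₀|, where N¹(L₀) is the set of unique neighbors of L₀. -/
open Finset

/-- `N¹(S)`: the set of unique neighbors of a set `S` of left vertices, i.e.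
the check nodes having exactly one neighbor in `S`. -/
def uniqueNbrs {n : ℕ} {R : Type*} [Fintype R] [DecidableEq R]
    (E : Finset (Fin n × R)) (S : Finset (Fin n)) : Finset R :=
  Finset.univ.filter fun j => (rightNbrs E j ∩ S).card = 1

/-! Count the edges leaving `S` at their check nodes. A unique neighbor receives one edge and every
other neighbor at least two, so `2 * |N(S)| - |N¹(S)|` is at most the number of these edges, hence
at most `c * |S|`; the expansion bound `ε * c * |S| ≤ |N(S)|` then gives the claim. -/

section Relation

variable {α β : Type*}

theorem two_mul_card_filter_pos_le_card_filter_eq_one_add_sum (t : Finset β) (f : β → ℕ) :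
    2 * #{b ∈ t | 0 < f b} ≤ #{b ∈ t | f b = 1} + ∑ b ∈ t, f b := by
  rw [card_filter, card_filter, mul_sum, ← sum_add_distrib]
  refine sum_le_sum fun b _ => ?_
  split_ifs <;> omega

variable (r : α → β → Prop) [∀ a b, Decidable (r a b)] (s : Finset α) (t : Finset β)

theorem two_mul_card_nonempty_bipartiteBelow_le :
    2 * #{b ∈ t | (s.bipartiteBelow r b).Nonempty} ≤
      #{b ∈ t | #(s.bipartiteBelow r b) = 1} + ∑ a ∈ s, #(t.bipartiteAbove r a) := by
  rw [sum_card_bipartiteAbove_eq_sum_card_bipartiteBelow]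
  simpa only [card_pos] using
    two_mul_card_filter_pos_le_card_filter_eq_one_add_sum t fun b => #(s.bipartiteBelow r b)

theorem unique_neighbor_expansion_general (c : ℕ) (ε : ℝ)
    (hdeg : ∀ a ∈ s, #(t.bipartiteAbove r a) ≤ c)
    (hexp : ε * c * #s ≤ #{b ∈ t | (s.bipartiteBelow r b).Nonempty}) :
    (2 * ε - 1) * c * #s ≤ #{b ∈ t | #(s.bipartiteBelow r b) = 1} := by
  have hedges : ∑ a ∈ s, #(t.bipartiteAbove r a) ≤ #s * c := sum_le_card_nsmul s _ c hdeg
  have hcount : (2 * #{b ∈ t | (s.bipartiteBelow r b).Nonempty} : ℝ) ≤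
      #{b ∈ t | #(s.bipartiteBelow r b) = 1} + #s * c := by
    exact_mod_cast (two_mul_card_nonempty_bipartiteBelow_le r s t).trans (by gcongr)
  linarith

end Relation

section TannerGraph

variable {n : ℕ} {R : Type*} [Fintype R] [DecidableEq R] (E : Finset (Fin n × R))

theorem rightNbrs_inter_eq_bipartiteBelow (S : Finset (Fin n)) (j : R) :
    rightNbrs E j ∩ S = S.bipartiteBelow (fun i j => (i, j) ∈ E) j := by
  rw [rightNbrs, filter_inter, univ_inter, bipartiteBelow]

theorem nbrSet_eq_filter_nonempty_bipartiteBelow (S : Finset (Fin n)) :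
    nbrSet E S = ({j | (S.bipartiteBelow (fun i j => (i, j) ∈ E) j).Nonempty} : Finset R) := by
  ext j
  simp [nbrSet, leftNbrs, bipartiteBelow, filter_nonempty_iff]

theorem uniqueNbrs_eq_filter_card_bipartiteBelow_eq_one (S : Finset (Fin n)) :
    uniqueNbrs E S = ({j | #(S.bipartiteBelow (fun i j => (i, j) ∈ E) j) = 1} : Finset R) := by
  simp only [uniqueNbrs, rightNbrs_inter_eq_bipartiteBelow]

end TannerGraph

/-- Unique-neighbor expansion: if `G` is a `(c, ε, δ)`-expander then every
`L₀ ⊆ L` with `|L₀| ≤ δn` satisfies `|N¹(L₀)| ≥ (2ε−1)·c·|L₀|`. -/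
theorem unique_neighbor_expansion {R : Type*} [Fintype R] [DecidableEq R]
    (n c : ℕ) (ε δ : ℝ) (E : Finset (Fin n × R))
    (hε : 0 < ε) (hδ : 0 < δ)
    (hexp : IsExpander n c ε δ E)
    (L₀ : Finset (Fin n)) (hL₀ : (L₀.card : ℝ) ≤ δ * n) :
    (2 * ε - 1) * c * L₀.card ≤ ((uniqueNbrs E L₀).card : ℝ) := by
  rw [uniqueNbrs_eq_filter_card_bipartiteBelow_eq_one]
  exact unique_neighbor_expansion_general _ L₀ univ c ε (fun i _ => (hexp.1 i).le)
    (nbrSet_eq_filter_nonempty_bipartiteBelow E L₀ ▸ hexp.2 L₀ hL₀)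
end

section
/- (Distance of expander codes.) Let G = (L, R, E) be a (c, ε, δ)-expander Tanner graph on n left vertices with ε > 1/2, and suppose δn is an integer. Let C = { w ∈ F₂ⁿ : for every j ∈ R, Σ_{i ∈ N(j)} w_i = 0 in F₂ } be the binary linear code defined by G. Then every nonzero codeword of C has Hamming weight at least 2εδn; equivalently, the minimum distance of C is at least 2εδn. -/
open Finset

/-!
The support of a codeword is a *stopping set*: a check with exactly one neighbor in the support
would evaluate to a nonzero sum. Hence each neighbor of a stopping set `S` receives at least two
of the `c|S|` edges leaving `S`, so `2|N(S)| ≤ c|S|`. A nonempty `S` with `|S| ≤ δn` would then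
expand by a factor of at most `c/2 < εc`, so `|S| > δn`. Expansion of a subset `T ⊆ S` of size
`δn` now gives `2εc·δn ≤ 2|N(T)| ≤ 2|N(S)| ≤ c|S|`.
-/

lemma card_filter_ne_zero_ne_one_of_sum_eq_zero {ι A : Type*} [AddCommMonoid A] [DecidableEq A]
    {s : Finset ι} {f : ι → A} (hf : ∑ i ∈ s, f i = 0) : #{i ∈ s | f i ≠ 0} ≠ 1 := by
  rw [Ne, card_eq_one]
  rintro ⟨a, ha⟩
  have hfa : f a ≠ 0 := (mem_filter.mp (ha.ge (mem_singleton_self a))).2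
  rw [← sum_filter_ne_zero, ha, sum_singleton] at hf
  exact hfa hf

section TannerGraph

variable {R : Type*} [Fintype R] [DecidableEq R] {n : ℕ} {E : Finset (Fin n × R)}
  {S T : Finset (Fin n)}

lemma mem_nbrSet_iff_nonempty_inter {j : R} :
    j ∈ nbrSet E S ↔ (rightNbrs E j ∩ S).Nonempty := by
  simp [nbrSet, leftNbrs, rightNbrs, Finset.Nonempty, and_comm]

lemma nbrSet_mono_s8 (h : T ⊆ S) : nbrSet E T ⊆ nbrSet E S :=
  biUnion_subset_biUnion_of_subset_left _ h

lemma sum_card_leftNbrs_eq_sum_card_rightNbrs_inter (E : Finset (Fin n × R))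
    (S : Finset (Fin n)) :
    ∑ i ∈ S, #(leftNbrs E i) = ∑ j, #(rightNbrs E j ∩ S) := by
  simpa [leftNbrs, rightNbrs, bipartiteAbove, bipartiteBelow, filter_inter] using
    sum_card_bipartiteAbove_eq_sum_card_bipartiteBelow (s := S) (t := univ)
      fun i j => (i, j) ∈ E

/-- A stopping set of a Tanner graph: a set of variable nodes such that no check node has exactly
one neighbor in it. Apart from being nonempty, this is all the distance bound needs of the support
of a codeword. -/
def IsStoppingSet (E : Finset (Fin n × R)) (S : Finset (Fin n)) : Prop :=
  ∀ j : R, #(rightNbrs E j ∩ S) ≠ 1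

lemma isStoppingSet_filter_ne_zero {A : Type*} [AddCommMonoid A] [DecidableEq A]
    {w : Fin n → A} (hw : ∀ j : R, ∑ i ∈ rightNbrs E j, w i = 0) :
    IsStoppingSet E {i | w i ≠ 0} := fun j => by
  rw [inter_filter, inter_univ]
  exact card_filter_ne_zero_ne_one_of_sum_eq_zero (hw j)

lemma IsStoppingSet.two_le_card_rightNbrs_inter (hS : IsStoppingSet E S) {j : R}
    (hj : j ∈ nbrSet E S) : 2 ≤ #(rightNbrs E j ∩ S) :=
  have hpos : 0 < #(rightNbrs E j ∩ S) := card_pos.mpr (mem_nbrSet_iff_nonempty_inter.mp hj)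
  Nat.lt_of_le_of_ne hpos (hS j).symm

lemma IsStoppingSet.two_mul_card_nbrSet_le (hS : IsStoppingSet E S) :
    2 * #(nbrSet E S) ≤ ∑ i ∈ S, #(leftNbrs E i) :=
  calc
    2 * #(nbrSet E S) = ∑ _j ∈ nbrSet E S, 2 := by rw [sum_const, smul_eq_mul, mul_comm]
    _ ≤ ∑ j ∈ nbrSet E S, #(rightNbrs E j ∩ S) :=
      sum_le_sum fun _ hj => hS.two_le_card_rightNbrs_inter hj
    _ ≤ ∑ j, #(rightNbrs E j ∩ S) := sum_le_sum_of_subset (subset_univ _)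
    _ = ∑ i ∈ S, #(leftNbrs E i) := (sum_card_leftNbrs_eq_sum_card_rightNbrs_inter E S).symm

namespace IsExpander

variable {c : ℕ} {ε δ : ℝ}

lemma two_mul_card_nbrSet_le (hE : IsExpander n c ε δ E) (hS : IsStoppingSet E S) :
    2 * (#(nbrSet E S) : ℝ) ≤ c * #S := by
  have hcount : 2 * #(nbrSet E S) ≤ c * #S := by
    simpa [hE.1, mul_comm] using hS.two_mul_card_nbrSet_le
  exact_mod_cast hcount

lemma lt_card_of_isStoppingSet (hE : IsExpander n c ε δ E) (hc : 0 < c) (hε : 1 / 2 < ε)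
    (hS : IsStoppingSet E S) (hne : S.Nonempty) : δ * n < #S := by
  by_contra! hle
  have hpos : (0 : ℝ) < c * #S := by
    have := hne.card_pos
    positivity
  have hcontr : 2 * ε * (c * #S) ≤ 1 * (c * #S) :=
    calc
      2 * ε * (c * #S) = 2 * (ε * c * #S) := by ring
      _ ≤ 2 * #(nbrSet E S) := by gcongr; exact hE.2 S hle
      _ ≤ 1 * (c * #S) := by rw [one_mul]; exact hE.two_mul_card_nbrSet_le hS
  linarith [le_of_mul_le_mul_right hcontr hpos]

lemma two_mul_mul_le_card_of_isStoppingSet (hE : IsExpander n c ε δ E) (hc : 0 < c)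
    (hε : 1 / 2 < ε) {m : ℕ} (hm : (m : ℝ) ≤ δ * n) (hS : IsStoppingSet E S)
    (hne : S.Nonempty) : 2 * ε * m ≤ #S := by
  have hmS : m ≤ #S := by
    exact_mod_cast hm.trans (hE.lt_card_of_isStoppingSet hc hε hS hne).le
  obtain ⟨T, hTS, rfl⟩ := exists_subset_card_eq hmS
  have hc' : (0 : ℝ) < c := by exact_mod_cast hc
  refine le_of_mul_le_mul_left ?_ hc'
  calc
    c * (2 * ε * #T) = 2 * (ε * c * #T) := by ring
    _ ≤ 2 * #(nbrSet E T) := by gcongr; exact hE.2 T hm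
    _ ≤ 2 * #(nbrSet E S) := by gcongr; exact nbrSet_mono_s8 hTS
    _ ≤ c * #S := hE.two_mul_card_nbrSet_le hS

end IsExpander

theorem expander_code_distance_general {A : Type*} [AddCommMonoid A] [DecidableEq A]
    {c : ℕ} {ε δ : ℝ} (hE : IsExpander n c ε δ E) (hc : 0 < c) (hε : 1 / 2 < ε)
    {m : ℕ} (hm : (m : ℝ) ≤ δ * n)
    {w : Fin n → A} (hw : ∀ j : R, ∑ i ∈ rightNbrs E j, w i = 0) (hw0 : w ≠ 0) :
    2 * ε * m ≤ hammingNorm w :=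
  hE.two_mul_mul_le_card_of_isStoppingSet hc hε hm (isStoppingSet_filter_ne_zero hw)
    (card_pos.mp (hammingNorm_pos_iff.mpr hw0))

end TannerGraph

/-- Distance of expander codes: if `G` is a `(c, ε, δ)`-expander with
`ε > 1/2` and `δn ∈ ℤ`, and `C = { w ∈ 𝔽₂ⁿ : ∀ j ∈ R, Σ_{i ∈ N(j)} w_i = 0 }`
is the binary linear code defined by `G`, then every nonzero codeword of `C`
has Hamming weight at least `2εδn`. -/
theorem expander_code_distance {R : Type*} [Fintype R] [DecidableEq R]
    (n c : ℕ) (ε δ : ℝ) (E : Finset (Fin n × R))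
    (hc : 0 < c) (hε : 1 / 2 < ε) (hδ : 0 < δ)
    (m : ℕ) (hm : (m : ℝ) = δ * n)
    (hexp : IsExpander n c ε δ E)
    (w : Fin n → ZMod 2)
    (hw : ∀ j : R, (∑ i ∈ rightNbrs E j, w i) = 0)
    (hw0 : w ≠ 0) :
    2 * ε * δ * n ≤ ((Finset.univ.filter fun i => w i ≠ 0).card : ℝ) := by
  rw [mul_assoc (2 * ε), ← hm]
  exact expander_code_distance_general hexp hc hε hm.le hw hw0
end
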